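/- arXiv:1111.3805 — 7 statements merged into one kernel-verified Lean document; each statement's English description precedes it below -/
import Mathlib

section
/- Let M ≥ 1, 1 ≤ m ≤ M, ρ > 0, let Λ = diag(λ_1,…,λ_M) with 0 ≤ λ_1 ≤ … ≤ λ_M, and let U be an M×M unitary matrix such that ∑_{l=1}^m |U_{lj}|² > 0 for every j. Then (1/M) ∑_{j=1}^M ( [(I_M + (ρ/M) U*ΛU)^{−1}]_{jj} )^{−1} ≤ ∑_{k=1}^m (1 + (ρ/M) λ_k) δ_k(U). -/
open Matrix

/-- `δ_k(U) = (1/M) ∑_{j=1}^M |U_{kj}|² / (∑_{l=1}^m |U_{lj}|²)²`, defined for an `M × M`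
matrix `U` (meaningful when `∑_{l=1}^m |U_{lj}|² > 0` for every `j`). -/
noncomputable def delta (M m : ℕ) (U : Matrix (Fin M) (Fin M) ℂ) (k : Fin M) : ℝ :=
  (1 / M : ℝ) * ∑ j : Fin M,
    ‖U k j‖ ^ 2 /
      (∑ l ∈ Finset.univ.filter (fun l : Fin M => (l : ℕ) < m), ‖U l j‖ ^ 2) ^ 2

/-!
The diagonal entry of the inverse is `∑ k, ‖U k j‖ ^ 2 / c k` with `c k = 1 + ρ / M * lam k ≥ 1`, since
`Uᴴ * diagonal c⁻¹ * U` inverts `1 + (ρ / M) • Uᴴ Λ U = Uᴴ * diagonal c * U`. All terms are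
nonnegative, so it is at least the partial sum over `k < m`, and the Cauchy–Schwarz inequality
`(∑ a) ^ 2 ≤ (∑ a / c) * (∑ c * a)` bounds the reciprocal of that partial sum by
`∑ c * a / (∑ a) ^ 2`. Averaging over `j` gives the claim.
-/

lemma inv_diag_re_eq {n : Type*} [Fintype n] [DecidableEq n] (t : ℝ) (lam : n → ℝ)
    (hc : ∀ k, 0 < 1 + t * lam k) (U : Matrix n n ℂ) (hU : U ∈ Matrix.unitaryGroup n ℂ) (j : n) :
    (((1 : Matrix n n ℂ) + (t : ℂ) •
        (Uᴴ * Matrix.diagonal (fun i => (lam i : ℂ)) * U))⁻¹ j j).re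
      = ∑ k, ‖U k j‖ ^ 2 / (1 + t * lam k) := by
  have h1 : Uᴴ * U = 1 := Matrix.mem_unitaryGroup_iff'.mp hU
  have h2 : U * Uᴴ = 1 := Matrix.mem_unitaryGroup_iff.mp hU
  have hA : (1 : Matrix n n ℂ) + (t : ℂ) • (Uᴴ * Matrix.diagonal (fun i => (lam i : ℂ)) * U)
      = Uᴴ * Matrix.diagonal (fun i => ((1 + t * lam i : ℝ) : ℂ)) * U := by
    have : Matrix.diagonal (fun i => ((1 + t * lam i : ℝ) : ℂ))
        = 1 + (t : ℂ) • Matrix.diagonal (fun i => (lam i : ℂ)) := by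
      rw [← Matrix.diagonal_one, ← Matrix.diagonal_smul, Matrix.diagonal_add]
      congr 1
      ext i
      simp
    rw [this, Matrix.mul_add, Matrix.add_mul, Matrix.mul_one, h1, Matrix.mul_smul,
      Matrix.smul_mul]
  have hinv : (Uᴴ * Matrix.diagonal (fun i => ((1 + t * lam i : ℝ) : ℂ)) * U)⁻¹
      = Uᴴ * Matrix.diagonal (fun i => (((1 + t * lam i)⁻¹ : ℝ) : ℂ)) * U := by
    apply Matrix.inv_eq_right_inv
    calc _ = Uᴴ * Matrix.diagonal (fun i => ((1 + t * lam i : ℝ) : ℂ)) * (U * Uᴴ) *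
          Matrix.diagonal (fun i => (((1 + t * lam i)⁻¹ : ℝ) : ℂ)) * U := by
          simp only [Matrix.mul_assoc]
      _ = Uᴴ * (Matrix.diagonal (fun i => ((1 + t * lam i : ℝ) : ℂ)) *
          Matrix.diagonal (fun i => (((1 + t * lam i)⁻¹ : ℝ) : ℂ))) * U := by
          rw [h2, Matrix.mul_one]
          simp only [Matrix.mul_assoc]
      _ = 1 := by
          have : (fun i => ((1 + t * lam i : ℝ) : ℂ) * (((1 + t * lam i)⁻¹ : ℝ) : ℂ))
              = fun _ => 1 := by
            ext i
            rw [← Complex.ofReal_mul, mul_inv_cancel₀ (hc i).ne', Complex.ofReal_one]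
          rw [Matrix.diagonal_mul_diagonal, this, Matrix.diagonal_one, Matrix.mul_one, h1]
  rw [hA, hinv, Matrix.mul_apply, Complex.re_sum]
  refine Finset.sum_congr rfl fun k _ => ?_
  rw [Matrix.mul_diagonal, Matrix.conjTranspose_apply, mul_right_comm, Complex.star_def,
    Complex.conj_mul', ← Complex.ofReal_pow, ← Complex.ofReal_mul, Complex.ofReal_re,
    div_eq_mul_inv]

lemma inv_sum_div_le {n : Type*} [Fintype n] (s : Finset n) (a c : n → ℝ)
    (ha : ∀ k, 0 ≤ a k) (hc : ∀ k, 0 < c k) (hs : 0 < ∑ k ∈ s, a k) :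
    (∑ k, a k / c k)⁻¹ ≤ ∑ k ∈ s, c k * (a k / (∑ l ∈ s, a l) ^ 2) := by
  have hcs : (∑ k ∈ s, a k) ^ 2 ≤ (∑ k ∈ s, a k / c k) * ∑ k ∈ s, c k * a k := by
    refine Finset.sum_sq_le_sum_mul_sum_of_sq_le_mul s
      (fun k _ => div_nonneg (ha k) (hc k).le) (fun k _ => mul_nonneg (hc k).le (ha k))
      fun k _ => le_of_eq ?_
    have := (hc k).ne'
    field_simp
  have hY : 0 ≤ ∑ k ∈ s, c k * a k := Finset.sum_nonneg fun k _ => mul_nonneg (hc k).le (ha k)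
  have hle : ∑ k ∈ s, a k / c k ≤ ∑ k, a k / c k :=
    Finset.sum_le_sum_of_subset_of_nonneg (Finset.subset_univ s)
      fun k _ _ => div_nonneg (ha k) (hc k).le
  have hfull := hcs.trans (mul_le_mul_of_nonneg_right hle hY)
  have hX : 0 < ∑ k, a k / c k :=
    pos_of_mul_pos_left ((pow_pos hs 2).trans_le hfull) hY
  have hR : ∑ k ∈ s, c k * (a k / (∑ l ∈ s, a l) ^ 2)
      = (∑ k ∈ s, c k * a k) / (∑ l ∈ s, a l) ^ 2 := by
    rw [Finset.sum_div]
    exact Finset.sum_congr rfl fun k _ => (mul_div_assoc _ _ _).symm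
  rw [hR, inv_eq_one_div, div_le_div_iff₀ hX (pow_pos hs 2), one_mul, mul_comm]
  exact hfull

/-- **Key inequality of the outage lower bound.**  For a unitary `U`, nonnegative ordered
`λ_1 ≤ … ≤ λ_M` and `Λ = diag(λ)`,
`(1/M) ∑_j ( [(I + (ρ/M) UᴴΛU)⁻¹]_{jj} )⁻¹ ≤ ∑_{k=1}^m (1 + (ρ/M) λ_k) δ_k(U)`. -/
theorem sum_inv_diag_le_sum_delta
    (M m : ℕ) (hM : 1 ≤ M) (hm : 1 ≤ m) (hmM : m ≤ M)
    (ρ : ℝ) (hρ : 0 < ρ)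
    (lam : Fin M → ℝ) (hlam0 : ∀ i, 0 ≤ lam i) (hmono : Monotone lam)
    (U : Matrix (Fin M) (Fin M) ℂ) (hU : U ∈ Matrix.unitaryGroup (Fin M) ℂ)
    (hpos : ∀ j : Fin M,
      0 < ∑ l ∈ Finset.univ.filter (fun l : Fin M => (l : ℕ) < m), ‖U l j‖ ^ 2) :
    (1 / M : ℝ) * ∑ j : Fin M,
        ((((1 : Matrix (Fin M) (Fin M) ℂ) + ((ρ / M : ℝ) : ℂ) •
            (Uᴴ * Matrix.diagonal (fun i => (lam i : ℂ)) * U))⁻¹ j j).re)⁻¹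
      ≤ ∑ k ∈ Finset.univ.filter (fun k : Fin M => (k : ℕ) < m),
          (1 + ρ / M * lam k) * delta M m U k := by
  have hc : ∀ k, 0 < 1 + ρ / M * lam k := fun k => by
    have := hlam0 k
    positivity
  have hR : ∑ k ∈ Finset.univ.filter (fun k : Fin M => (k : ℕ) < m),
        (1 + ρ / M * lam k) * delta M m U k
      = (1 / M : ℝ) * ∑ j : Fin M, ∑ k ∈ Finset.univ.filter (fun k : Fin M => (k : ℕ) < m),
        (1 + ρ / M * lam k) * (‖U k j‖ ^ 2 /
          (∑ l ∈ Finset.univ.filter (fun l : Fin M => (l : ℕ) < m), ‖U l j‖ ^ 2) ^ 2) := by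
    rw [Finset.sum_comm, Finset.mul_sum]
    refine Finset.sum_congr rfl fun k _ => ?_
    rw [delta, mul_left_comm, Finset.mul_sum (a := 1 + ρ / M * lam k)]
  rw [hR]
  gcongr with j _
  rw [inv_diag_re_eq (ρ / M) lam hc U hU j]
  exact inv_sum_div_le _ (fun k => ‖U k j‖ ^ 2) _ (fun k => by positivity) hc (hpos j)
end

section
/- Let M ≥ 1, R > 0 and m ∈ {1,…,M} satisfy m − 1 < M·2^{−R/M}. Then there exists a finite constant μ_m such that for every ρ > 0 and all reals 0 < λ_1 ≤ λ_2 ≤ … ≤ λ_M, the inequality ∑_{k=1}^M (1 + (ρ/M) λ_k)^{−1} > M·2^{−R/M} implies ρ λ_m ≤ μ_m. In other words, sup{ ρλ_m : ρ > 0, 0 < λ_1 ≤ … ≤ λ_M, ∑_{k=1}^M (1 + (ρ/M)λ_k)^{−1} > M·2^{−R/M} } < +∞. -/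
/-!
Put `x = ρ λ_m`. The first `m - 1` summands are each at most `1`, and by monotonicity each of the
remaining ones is at most `(1 + x / M)⁻¹`. Hence the sum is at most `(m - 1) + M (1 + x / M)⁻¹`,
and if it exceeds `c = M 2^{-R/M}` then `d := c - (m - 1) > 0` satisfies `d < M (1 + x / M)⁻¹`,
which gives `x ≤ M² / d`.
-/


/-- **Boundedness of `ρ λ_m` on the outage event.**  If `m - 1 < M 2^{-R/M}` then there
is a finite constant `μ_m` such that for all `ρ > 0` and all `0 < λ_1 ≤ … ≤ λ_M`,
`∑_{k=1}^M (1 + (ρ/M) λ_k)⁻¹ > M 2^{-R/M}` implies `ρ λ_m ≤ μ_m`. -/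
theorem exists_bound_rho_lambda_m
    (M : ℕ) (hM : 1 ≤ M) (R : ℝ) (hR : 0 < R)
    (m : ℕ) (hm : 1 ≤ m) (hmM : m ≤ M)
    (hcond : (m : ℝ) - 1 < (M : ℝ) * (2 : ℝ) ^ (-(R / M))) :
    ∃ μm : ℝ, ∀ ρ : ℝ, 0 < ρ → ∀ lam : Fin M → ℝ,
      (∀ i, 0 < lam i) → Monotone lam →
      ((M : ℝ) * (2 : ℝ) ^ (-(R / M)) < ∑ k : Fin M, (1 + ρ / M * lam k)⁻¹) →
      ρ * lam ⟨m - 1, by omega⟩ ≤ μm := by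
  set c : ℝ := (M : ℝ) * (2 : ℝ) ^ (-(R / M))
  have hMpos : (0 : ℝ) < M := by exact_mod_cast hM
  have hd : 0 < c - ((m : ℝ) - 1) := by linarith
  refine ⟨(M : ℝ) ^ 2 / (c - ((m : ℝ) - 1)), fun ρ hρ lam hpos hmono hsum => ?_⟩
  set j : Fin M := ⟨m - 1, by omega⟩ with hj
  have hρM : 0 < ρ / M := div_pos hρ hMpos
  have hy : 0 < 1 + ρ / M * lam j := by
    have := mul_pos hρM (hpos j)
    linarith
  have hterm : ∀ k : Fin M, (1 + ρ / M * lam k)⁻¹ ≤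
      (if k < j then (1 : ℝ) else 0) + (1 + ρ / M * lam j)⁻¹ := by
    intro k
    split_ifs with hk
    · have h1 : (1 + ρ / M * lam k)⁻¹ ≤ 1 :=
        inv_le_one_of_one_le₀ (by linarith [mul_pos hρM (hpos k)])
      linarith [inv_pos.mpr hy]
    · rw [zero_add]
      exact inv_anti₀ hy (by gcongr; exact hmono (not_lt.mp hk))
  have hcard : ∑ k : Fin M, (if k < j then (1 : ℝ) else 0) = (m : ℝ) - 1 := by
    rw [Finset.sum_boole, Finset.filter_gt_eq_Iio, Fin.card_Iio, hj]
    push_cast [Nat.cast_sub hm]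
    ring
  have hle := Finset.sum_le_sum (s := Finset.univ) fun k _ => hterm k
  rw [Finset.sum_add_distrib, hcard, Finset.sum_const, Finset.card_univ, Fintype.card_fin,
    nsmul_eq_mul] at hle
  have hlt : c - ((m : ℝ) - 1) < M / (1 + ρ / M * lam j) := by
    rw [div_eq_mul_inv]
    linarith
  rw [lt_div_iff₀ hy] at hlt
  rw [le_div_iff₀ hd]
  have hx : ρ * lam j = M * (ρ / M * lam j) := by field_simp
  rw [hx]
  nlinarith
end

section
/- Let N ≥ M ≥ 1 and 1 ≤ m ≤ M be integers and b > 0. Define, for ρ > 0, F(ρ) = ∫_{ {0 < λ_1 ≤ … ≤ λ_M, ∑_{k=1}^m ρλ_k < b} } ∏_{i=1}^M λ_i^{N−M} e^{−λ_i} ∏_{1≤i<j≤M} (λ_i − λ_j)² dλ_1 ⋯ dλ_M. Then liminf_{ρ→∞} log F(ρ)/log ρ ≥ −m(N−M+m). -/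
/-!
The lower bound comes from restricting the integral to one small box. With `δ = c / ρ`, where
`c = b / (4 m²)`, put `s k = δ` for `k < m` and `s k = 1` otherwise (indices start at `0`), and let
`x k` range over `[(2k+1) s k, (2k+2) s k]`. Such `x` are positive and increasing, satisfy the sum
constraint, and have `x k ≥ s k` and `x j - x i ≥ s j` for `i < j`. Hence the weight is at least a
constant times `∏ k, s k ^ (N - M + 2k)`; multiplying by the volume `∏ k, s k` of the box gives
`∏ k, s k ^ (N - M + 2k + 1) = δ ^ (m (N - M + m))`, which is the required order in `ρ`.

The real-valued `liminf` and the Bochner integral also require that the weight be integrable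
on the positive orthant (`integrableOn_wishartWeight`), which bounds the integral above uniformly
in `ρ`.
-/

open MeasureTheory

/-- The (unnormalized) joint density of the ordered eigenvalues of an `M × M` complex
Wishart matrix with `N` degrees of freedom:
`w(λ) = ∏_i λ_i^{N-M} e^{-λ_i} ∏_{i<j} (λ_i - λ_j)²`. -/
noncomputable def wishartWeight (N M : ℕ) (x : Fin M → ℝ) : ℝ :=
  (∏ i : Fin M, x i ^ (N - M) * Real.exp (-x i)) *
    ∏ i : Fin M, ∏ j ∈ Finset.Ioi i, (x i - x j) ^ 2

/-! ### Integrability of the weight -/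

lemma wishartWeight_nonneg (N M : ℕ) {x : Fin M → ℝ} (hx : ∀ i, 0 < x i) :
    0 ≤ wishartWeight N M x := by
  unfold wishartWeight
  refine mul_nonneg (Finset.prod_nonneg fun i _ => ?_)
    (Finset.prod_nonneg fun i _ => Finset.prod_nonneg fun j _ => sq_nonneg _)
  have := hx i
  positivity

lemma continuous_wishartWeight (N M : ℕ) : Continuous (wishartWeight N M) := by
  unfold wishartWeight
  fun_prop

lemma measurableSet_orthant (M : ℕ) : MeasurableSet {x : Fin M → ℝ | ∀ i, 0 < x i} := by
  simp only [Set.ofPred_forall]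
  exact MeasurableSet.iInter fun i => measurableSet_lt measurable_const (measurable_pi_apply i)

lemma integrableOn_one_add_pow_mul_exp_neg (n : ℕ) :
    IntegrableOn (fun x : ℝ => (1 + x) ^ n * Real.exp (-x)) (Set.Ioi 0) := by
  refine integrable_of_isBigO_exp_neg (b := 1 / 2) (by norm_num) (by fun_prop) ?_
  have h1 : (fun x : ℝ => (1 + x) ^ n) =O[Filter.atTop] fun x => Real.exp ((1 / 2) * x) := by
    have h2 : (fun x : ℝ => 1 + x) =O[Filter.atTop] fun x => x := by
      refine Asymptotics.IsBigO.of_bound 2 ?_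
      filter_upwards [Filter.eventually_ge_atTop 1] with x hx
      rw [Real.norm_of_nonneg (by linarith), Real.norm_of_nonneg (by linarith)]
      linarith
    exact (h2.pow n).trans (isLittleO_pow_exp_pos_mul_atTop n (by norm_num)).isBigO
  refine (h1.mul (Asymptotics.isBigO_refl (fun x : ℝ => Real.exp (-x)) _)).congr_right ?_
  intro x
  rw [← Real.exp_add]
  ring_nf

/-- On the positive orthant each factor `(x i - x j) ^ 2` is at most `(∏ k, (1 + x k)) ^ 2`, so the
weight is dominated by a product of integrable one-variable functions. -/
lemma integrableOn_wishartWeight (N M : ℕ) :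
    IntegrableOn (wishartWeight N M) {x : Fin M → ℝ | ∀ i, 0 < x i} := by
  set K := 2 * M * M with hK
  have hset : {x : Fin M → ℝ | ∀ i, 0 < x i} = Set.univ.pi fun _ => Set.Ioi (0 : ℝ) := by
    ext x; simp
  have hdom : IntegrableOn (fun x : Fin M → ℝ =>
      ∏ i, ((1 + x i) ^ (N - M + K) * Real.exp (-x i))) {x : Fin M → ℝ | ∀ i, 0 < x i} := by
    rw [hset, IntegrableOn, volume_pi, Measure.restrict_pi_pi]
    exact Integrable.fintype_prod fun _ => integrableOn_one_add_pow_mul_exp_neg (N - M + K)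
  refine hdom.mono' (continuous_wishartWeight N M).aestronglyMeasurable ?_
  filter_upwards [ae_restrict_mem (measurableSet_orthant M)] with x hx
  change ∀ i, 0 < x i at hx
  rw [Real.norm_of_nonneg (wishartWeight_nonneg N M hx)]
  set P := ∏ k, (1 + x k) with hP
  have hxP : ∀ i, x i ≤ P := fun i => by
    have h1 : 1 + x i ≤ P := by
      simpa using Finset.prod_le_prod_of_subset_of_one_le (f := fun k => 1 + x k)
        (Finset.subset_univ {i}) (fun k _ => by linarith [hx k]) fun k _ _ => by linarith [hx k]
    linarith
  have hP1 : 1 ≤ P := Finset.one_le_prod fun k _ => by linarith [hx k]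
  have hpair : ∀ i j, (x i - x j) ^ 2 ≤ P ^ 2 := fun i j =>
    sq_le_sq' (by linarith [hx i, hxP j]) (by linarith [hx j, hxP i])
  have hvand : ∏ i : Fin M, ∏ j ∈ Finset.Ioi i, (x i - x j) ^ 2 ≤ P ^ K := by
    calc ∏ i : Fin M, ∏ j ∈ Finset.Ioi i, (x i - x j) ^ 2
        ≤ ∏ i : Fin M, P ^ (2 * M) := by
          refine Finset.prod_le_prod
            (fun i _ => Finset.prod_nonneg fun j _ => sq_nonneg _) fun i _ => ?_
          calc ∏ j ∈ Finset.Ioi i, (x i - x j) ^ 2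
              ≤ ∏ j ∈ Finset.Ioi i, P ^ 2 :=
                Finset.prod_le_prod (fun j _ => sq_nonneg _) fun j _ => hpair i j
            _ = P ^ (2 * (Finset.Ioi i).card) := by rw [Finset.prod_const, pow_mul]
            _ ≤ P ^ (2 * M) := by
                refine pow_le_pow_right₀ hP1 (Nat.mul_le_mul_left 2 ?_)
                simpa using Finset.card_le_univ (Finset.Ioi i)
      _ = P ^ K := by simp [hK, ← pow_mul]
  unfold wishartWeight
  calc _ ≤ (∏ i : Fin M, (1 + x i) ^ (N - M) * Real.exp (-x i)) * P ^ K := by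
        refine mul_le_mul ?_ hvand
          (Finset.prod_nonneg fun i _ => Finset.prod_nonneg fun j _ => sq_nonneg _)
          (Finset.prod_nonneg fun i _ => ?_)
        · refine Finset.prod_le_prod (fun i _ => ?_) fun i _ => ?_
          · have := hx i
            positivity
          · have := hx i
            gcongr
            linarith
        · have := hx i
          positivity
    _ = _ := by
        rw [hP, ← Finset.prod_pow, ← Finset.prod_mul_distrib]
        refine Finset.prod_congr rfl fun i _ => ?_
        ring

/-! ### Lower bound on a box -/

/-- The total exponent: the first `m` coordinates contribute `N - M + 2k + 1` each. -/
lemma prod_scale_pow (M m a : ℕ) (hmM : m ≤ M) (δ : ℝ) :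
    ∏ k : Fin M, (if (k : ℕ) < m then δ else 1) ^ (a + 2 * (k : ℕ) + 1) = δ ^ (m * (a + m)) := by
  rw [Fin.prod_univ_eq_prod_range (fun k => (if k < m then δ else 1) ^ (a + 2 * k + 1)) M,
    ← Finset.prod_subset (Finset.range_subset_range.2 hmM)]
  · have : ∀ n : ℕ, ∏ k ∈ Finset.range n, δ ^ (a + 2 * k + 1) = δ ^ (n * (a + n)) := by
      intro n
      induction n with
      | zero => simp
      | succ n ih => rw [Finset.prod_range_succ, ih, ← pow_add]; ring_nf
    rw [← this m]
    refine Finset.prod_congr rfl fun k hk => ?_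
    rw [if_pos (Finset.mem_range.1 hk)]
  · intro k _ hk
    rw [if_neg (by simpa using hk), one_pow]

/-- Pointwise lower bound for the weight at a point whose gaps are controlled by scales `s`. -/
lemma le_wishartWeight (N M : ℕ) (s x : Fin M → ℝ) (B : ℝ) (hs : ∀ k, 0 < s k)
    (hsx : ∀ k, s k ≤ x k) (hxB : ∀ k, x k ≤ B) (hgap : ∀ i j, i < j → s j ≤ x j - x i) :
    Real.exp (-B) ^ M * ∏ k, s k ^ (N - M + 2 * (k : ℕ)) ≤ wishartWeight N M x := by
  have hv : ∏ k : Fin M, s k ^ (2 * (k : ℕ)) ≤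
      ∏ i : Fin M, ∏ j ∈ Finset.Ioi i, (x i - x j) ^ 2 := by
    calc ∏ k : Fin M, s k ^ (2 * (k : ℕ))
        = ∏ j : Fin M, ∏ i ∈ Finset.Iio j, s j ^ 2 := by
          refine Finset.prod_congr rfl fun j _ => ?_
          rw [Finset.prod_const, Fin.card_Iio, pow_mul]
      _ = ∏ i : Fin M, ∏ j ∈ Finset.Ioi i, s j ^ 2 :=
          Finset.prod_comm' (by simp)
      _ ≤ _ := by
          refine Finset.prod_le_prod
            (fun i _ => Finset.prod_nonneg fun j _ => sq_nonneg _) fun i _ => ?_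
          refine Finset.prod_le_prod (fun j _ => sq_nonneg _) fun j hj => ?_
          rw [← neg_sq (x i - x j), neg_sub]
          exact pow_le_pow_left₀ (hs j).le (hgap i j (Finset.mem_Ioi.1 hj)) 2
  unfold wishartWeight
  calc _ = (∏ k : Fin M, s k ^ (N - M) * Real.exp (-B)) * ∏ k : Fin M, s k ^ (2 * (k : ℕ)) := by
        simp only [pow_add, Finset.prod_mul_distrib, Finset.prod_const, Finset.card_univ,
          Fintype.card_fin]
        ring
    _ ≤ _ := by
        refine mul_le_mul ?_ hv (Finset.prod_nonneg fun k _ => by have := hs k; positivity)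
          (Finset.prod_nonneg fun k _ => ?_)
        · refine Finset.prod_le_prod (fun k _ => by have := hs k; positivity) fun k _ => ?_
          have := hs k
          have := hsx k
          have := hxB k
          have : 0 ≤ x k := by linarith
          gcongr
        · have := (hs k).trans_le (hsx k)
          positivity

/-- The integral is at least a constant multiple of `δ ^ (m (N - M + m))` as soon as
`2 m² ρ δ < b`. -/
lemma le_wishart_integral (N M m : ℕ) (hmM : m ≤ M) (b ρ δ : ℝ) (hρ : 0 < ρ)
    (hδ : 0 < δ) (hδ1 : δ ≤ 1) (hb : 2 * (m : ℝ) ^ 2 * (ρ * δ) < b) :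
    Real.exp (-(2 * M)) ^ M * δ ^ (m * (N - M + m)) ≤
      ∫ x in {x : Fin M → ℝ | (∀ i, 0 < x i) ∧ Monotone x ∧
          ∑ k ∈ Finset.univ.filter (fun k : Fin M => (k : ℕ) < m), ρ * x k < b},
        wishartWeight N M x := by
  set S := {x : Fin M → ℝ | (∀ i, 0 < x i) ∧ Monotone x ∧
          ∑ k ∈ Finset.univ.filter (fun k : Fin M => (k : ℕ) < m), ρ * x k < b} with hS
  set s : Fin M → ℝ := fun k => if (k : ℕ) < m then δ else 1 with hsdef
  have hs : ∀ k, 0 < s k := fun k => by simp only [hsdef]; split_ifs <;> linarith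
  have hs1 : ∀ k, s k ≤ 1 := fun k => by simp only [hsdef]; split_ifs <;> linarith
  have hsmono : ∀ i j, i < j → s i ≤ s j := fun i j hij => by
    have : (i : ℕ) < j := hij
    simp only [hsdef]
    split_ifs <;> linarith
  set T : Set (Fin M → ℝ) := Set.Icc (fun k => (2 * (k : ℕ) + 1) * s k)
    (fun k => (2 * (k : ℕ) + 2) * s k) with hT
  have hsx : ∀ x ∈ T, ∀ k, s k ≤ x k := fun x hx k => by
    have h1 := hx.1 k
    have h2 : 0 ≤ ((k : ℕ) : ℝ) * s k := mul_nonneg (Nat.cast_nonneg _) (hs k).le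
    simp only at h1
    linarith
  have hgap : ∀ x ∈ T, ∀ i j, i < j → s j ≤ x j - x i := fun x hx i j hij => by
    have h1 := hx.1 j
    have h2 := hx.2 i
    simp only at h1 h2
    have hij' : ((i : ℕ) : ℝ) + 1 ≤ (j : ℕ) := by exact_mod_cast hij
    have h3 : (2 * ((i : ℕ) : ℝ) + 2) * s i ≤ (2 * ((i : ℕ) : ℝ) + 2) * s j :=
      mul_le_mul_of_nonneg_left (hsmono i j hij) (by positivity)
    have h4 : (2 * ((i : ℕ) : ℝ) + 2) * s j ≤ (2 * ((j : ℕ) : ℝ)) * s j :=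
      mul_le_mul_of_nonneg_right (by linarith) (hs j).le
    linarith
  have hxB : ∀ x ∈ T, ∀ k, x k ≤ 2 * M := fun x hx k => by
    have h2 := hx.2 k
    simp only at h2
    have hk : ((k : ℕ) : ℝ) + 1 ≤ M := by exact_mod_cast k.2
    have h3 : (2 * ((k : ℕ) : ℝ) + 2) * s k ≤ (2 * ((k : ℕ) : ℝ) + 2) * 1 :=
      mul_le_mul_of_nonneg_left (hs1 k) (by positivity)
    linarith
  have hTS : T ⊆ S := by
    intro x hx
    refine ⟨fun k => (hs k).trans_le (hsx x hx k), fun i j hij => ?_, ?_⟩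
    · rcases hij.eq_or_lt with rfl | hij
      · exact le_rfl
      · linarith [hgap x hx i j hij, hs j]
    · refine lt_of_le_of_lt ?_ hb
      calc ∑ k ∈ Finset.univ.filter (fun k : Fin M => (k : ℕ) < m), ρ * x k
          ≤ ∑ k ∈ Finset.univ.filter (fun k : Fin M => (k : ℕ) < m), 2 * m * (ρ * δ) := by
            refine Finset.sum_le_sum fun k hk => ?_
            have hkm : (k : ℕ) < m := (Finset.mem_filter.1 hk).2
            have h2 := hx.2 k
            simp only [hsdef, if_pos hkm] at h2
            have hk' : ((k : ℕ) : ℝ) + 1 ≤ m := by exact_mod_cast hkm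
            have h3 : (2 * ((k : ℕ) : ℝ) + 2) * δ ≤ 2 * m * δ :=
              mul_le_mul_of_nonneg_right (by linarith) hδ.le
            calc ρ * x k ≤ ρ * (2 * m * δ) := mul_le_mul_of_nonneg_left (h2.trans h3) hρ.le
              _ = _ := by ring
        _ = 2 * (m : ℝ) ^ 2 * (ρ * δ) := by
            have hc : (Finset.univ.filter (fun k : Fin M => (k : ℕ) < m)).card = m := by
              rw [Fin.card_filter_val_lt, min_eq_right hmM]
            rw [Finset.sum_const, hc, nsmul_eq_mul]
            ring
  have hSmeas : MeasurableSet S := by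
    have h2 : IsClosed {x : Fin M → ℝ | Monotone x} := by
      simp only [Monotone, Set.ofPred_forall]
      exact isClosed_iInter fun i => isClosed_iInter fun j => isClosed_iInter fun _ =>
        isClosed_le (continuous_apply i) (continuous_apply j)
    have h3 : Measurable fun x : Fin M → ℝ =>
        ∑ k ∈ Finset.univ.filter (fun k : Fin M => (k : ℕ) < m), ρ * x k := by fun_prop
    exact (measurableSet_orthant M).inter
      (h2.measurableSet.inter (measurableSet_lt h3 measurable_const))
  have hint : IntegrableOn (wishartWeight N M) S :=
    (integrableOn_wishartWeight N M).mono_set fun x hx => hx.1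
  have hvol : volume.real T = ∏ k, s k := by
    rw [hT, Measure.real, Real.volume_Icc_pi_toReal]
    · refine Finset.prod_congr rfl fun k _ => ?_
      ring
    · intro k
      have := hs k
      simp only
      linarith
  have hTfin : volume T ≠ ⊤ := isCompact_Icc.measure_lt_top.ne
  calc Real.exp (-(2 * M)) ^ M * δ ^ (m * (N - M + m))
      = ∫ x in T, Real.exp (-(2 * M)) ^ M * ∏ k, s k ^ (N - M + 2 * (k : ℕ)) := by
        rw [setIntegral_const, hvol, smul_eq_mul, ← prod_scale_pow M m (N - M) hmM δ]
        simp only [pow_succ _ (N - M + 2 * _), Finset.prod_mul_distrib]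
        ring
    _ ≤ ∫ x in T, wishartWeight N M x :=
        setIntegral_mono_on (integrableOn_const hTfin) (hint.mono_set hTS) measurableSet_Icc
          fun x hx => le_wishartWeight N M s x _ hs (hsx x hx) (hxB x hx) (hgap x hx)
    _ ≤ _ := by
        refine setIntegral_mono_set hint ?_ hTS.eventuallyLE
        filter_upwards [ae_restrict_mem hSmeas] with x hx
        exact wishartWeight_nonneg N M hx.1

/-! ### Passage to the limit -/

/-- **Asymptotic lower bound for the Wishart eigenvalue integral.**  For
`F(ρ) = ∫_{0 < λ_1 ≤ … ≤ λ_M, ∑_{k=1}^m ρλ_k < b} w(λ) dλ` one has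
`liminf_{ρ→∞} log F(ρ)/log ρ ≥ -m(N-M+m)`. -/
theorem wishart_integral_liminf
    (N M m : ℕ) (hM : 1 ≤ M) (hMN : M ≤ N) (hm : 1 ≤ m) (hmM : m ≤ M)
    (b : ℝ) (hb : 0 < b) :
    -((m : ℝ) * ((N : ℝ) - (M : ℝ) + (m : ℝ))) ≤
      Filter.liminf
        (fun ρ : ℝ =>
          Real.log
            (∫ x in {x : Fin M → ℝ | (∀ i, 0 < x i) ∧ Monotone x ∧
                ∑ k ∈ Finset.univ.filter (fun k : Fin M => (k : ℕ) < m), ρ * x k < b},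
              wishartWeight N M x) / Real.log ρ)
        Filter.atTop := by
  set F : ℝ → ℝ := fun ρ => ∫ x in {x : Fin M → ℝ | (∀ i, 0 < x i) ∧ Monotone x ∧
                ∑ k ∈ Finset.univ.filter (fun k : Fin M => (k : ℕ) < m), ρ * x k < b},
              wishartWeight N M x with hF
  set D : ℕ := m * (N - M + m) with hD
  have hDcast : -((m : ℝ) * ((N : ℝ) - (M : ℝ) + (m : ℝ))) = -(D : ℝ) := by
    rw [hD]; push_cast [Nat.cast_sub hMN]; ring
  rw [hDcast]
  have hm0 : (0 : ℝ) < m := by exact_mod_cast hm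
  -- With `δ = c / ρ` the box satisfies `∑ ρ x k ≤ 2 m² c = b / 2 < b`.
  set c : ℝ := b / (4 * (m : ℝ) ^ 2) with hc
  have hc0 : 0 < c := by positivity
  set C : ℝ := Real.exp (-(2 * M)) ^ M * c ^ D with hC
  have hC0 : 0 < C := by positivity
  have hlow : ∀ᶠ ρ in Filter.atTop, C * (ρ ^ D)⁻¹ ≤ F ρ := by
    filter_upwards [Filter.eventually_ge_atTop c, Filter.eventually_gt_atTop 0] with ρ h1 h2
    have h := le_wishart_integral N M m hmM b ρ (c / ρ) h2 (by positivity)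
      ((div_le_one h2).2 h1) (by
        rw [mul_div_cancel₀ _ h2.ne', hc]
        field_simp
        linarith)
    rw [div_pow, div_eq_mul_inv, ← mul_assoc] at h
    exact h
  have hup : ∀ ρ, F ρ ≤ ∫ x in {x : Fin M → ℝ | ∀ i, 0 < x i}, wishartWeight N M x := by
    intro ρ
    refine setIntegral_mono_set (integrableOn_wishartWeight N M) ?_
      (LE.le.eventuallyLE fun x hx => hx.1)
    filter_upwards [ae_restrict_mem (measurableSet_orthant M)] with x hx
    exact wishartWeight_nonneg N M hx
  set I := ∫ x in {x : Fin M → ℝ | ∀ i, 0 < x i}, wishartWeight N M x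
  have hlog : Filter.Tendsto Real.log Filter.atTop Filter.atTop := Real.tendsto_log_atTop
  have hlim : Filter.Tendsto (fun ρ => Real.log C / Real.log ρ - D) Filter.atTop
      (nhds (-(D : ℝ))) := by
    simpa using (hlog.const_div_atTop (Real.log C)).sub_const (D : ℝ)
  rw [← hlim.liminf_eq]
  refine Filter.liminf_le_liminf ?_ hlim.isBoundedUnder_ge ?_
  · filter_upwards [hlow, Filter.eventually_gt_atTop 1] with ρ h1 h2
    have h0 : 0 < ρ := by linarith
    have hl : 0 < Real.log ρ := Real.log_pos h2
    have h3 := Real.log_le_log (by positivity) h1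
    rw [Real.log_mul hC0.ne' (by positivity), Real.log_inv, Real.log_pow] at h3
    rw [le_div_iff₀ hl, sub_mul, div_mul_cancel₀ _ hl.ne']
    linarith
  -- The set whose supremum is the real `liminf` must be bounded above: `log F ≤ |log I|`.
  · refine Filter.IsBoundedUnder.isCoboundedUnder_ge
      (Filter.isBoundedUnder_of_eventually_le (a := |Real.log I|) ?_)
    filter_upwards [hlow, Filter.eventually_gt_atTop 0, hlog.eventually_ge_atTop 1]
      with ρ h1 h0 h2
    have hFpos : 0 < F ρ := lt_of_lt_of_le (by positivity) h1
    have h3 := (Real.log_le_log hFpos (hup ρ)).trans (le_abs_self _)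
    rw [div_le_iff₀ (by linarith)]
    exact h3.trans (le_mul_of_one_le_right (abs_nonneg _) h2)
end

section
/- Let H_0,…,H_{L−1} be N×M complex matrices, K ≥ L, ρ > 0, H(z) = ∑_{l=0}^{L−1} H_l z^{−l}, and S(ν) = I_M + (ρ/M) H(e^{2iπν})* H(e^{2iπν}). Then for every j = 1,…,M: (1/K) ∑_{k=0}^{K−1} [ S(k/K)^{−1} ]_{jj} ≥ ( [ I_M + (ρ/M) ∑_{l=0}^{L−1} H_l* H_l ]^{−1} )_{jj}. -/
/-!
For a positive definite `S`, completing the square in `(y - S⁻¹ eⱼ)ᴴ S (y - S⁻¹ eⱼ) ≥ 0` gives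
`[S⁻¹]ⱼⱼ ≥ 2 Re yⱼ - yᴴ S y` for every vector `y` (`two_re_sub_le_inv_diag`), with equality at
`y = S⁻¹ eⱼ`. The lower bound is affine in `S`, which is the convexity behind the Jensen
inequality: fixing `y = S̄⁻¹ eⱼ` for the average `S̄` of the matrices `S(k/K)` and averaging the
bounds over `k` yields `[S̄⁻¹]ⱼⱼ`.

The average `S̄` equals `I + (ρ/M) ∑ₗ HₗᴴHₗ` by the discrete Parseval identity
(`sum_conjTranspose_mul_transferFn`), i.e. orthogonality of the characters `k ↦ ω^(lk)` of `ℤ/K`;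
the condition `L ≤ K` ensures that distinct taps correspond to distinct characters.
-/

open Matrix

/-- The channel transfer function evaluated on the unit circle:
`H(e^{2iπν}) = ∑_{l=0}^{L-1} H_l e^{-2iπνl}`. -/
noncomputable def transferFn (N M L : ℕ) (H : Fin L → Matrix (Fin N) (Fin M) ℂ) (ν : ℝ) :
    Matrix (Fin N) (Fin M) ℂ :=
  ∑ l : Fin L, Complex.exp (-(2 * Real.pi * ν * (l : ℕ)) * Complex.I) • H l

open scoped ComplexOrder

/-- Orthogonality of the powers of a primitive `K`-th root of unity. -/
lemma sum_inv_pow_mul_pow {K : ℕ} {ω : ℂ} (hω : IsPrimitiveRoot ω K) (hK : 1 ≤ K)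
    {l m : ℕ} (hl : l < K) (hm : m < K) :
    ∑ k ∈ Finset.range K, ((ω⁻¹ ^ l) * ω ^ m) ^ k = if l = m then (K : ℂ) else 0 := by
  have h0 : ω ≠ 0 := hω.ne_zero (by omega)
  split_ifs with h
  · subst h
    simp [h0]
  · have h1 : (ω⁻¹ ^ l) * ω ^ m ≠ 1 := by
      intro h1
      apply h
      apply hω.pow_inj hl hm
      rw [inv_pow] at h1
      exact ((inv_mul_eq_one₀ (pow_ne_zero _ h0)).1 h1)
    have h2 := geom_sum_mul ((ω⁻¹ ^ l) * ω ^ m) K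
    have h3 : ((ω⁻¹ ^ l) * ω ^ m) ^ K = 1 := by
      rw [mul_pow, ← pow_mul, ← pow_mul, mul_comm l, mul_comm m, pow_mul, pow_mul, inv_pow,
        hω.pow_eq_one]
      simp
    rw [h3, sub_self] at h2
    exact (mul_eq_zero.1 h2).resolve_right (sub_ne_zero.2 h1)

/-- Discrete Parseval identity for the matrix-valued transfer function. -/
lemma sum_conjTranspose_mul_transferFn (N M L K : ℕ) (hKL : L ≤ K) (hK : 1 ≤ K)
    (H : Fin L → Matrix (Fin N) (Fin M) ℂ) :
    ∑ k ∈ Finset.range K,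
      (transferFn N M L H ((k : ℝ) / K))ᴴ * transferFn N M L H ((k : ℝ) / K)
      = (K : ℂ) • ∑ l : Fin L, (H l)ᴴ * H l := by
  have hK0 : (K : ℂ) ≠ 0 := by exact_mod_cast (by omega : K ≠ 0)
  obtain ⟨ω, hω, hdef⟩ : ∃ ω : ℂ, IsPrimitiveRoot ω K ∧
      ω = Complex.exp (-(2 * Real.pi * Complex.I / K)) :=
    ⟨_, by rw [Complex.exp_neg]; exact (Complex.isPrimitiveRoot_exp K (by omega)).inv, rfl⟩
  have hstar : star ω = ω⁻¹ := by
    rw [hdef, ← Complex.exp_neg, Complex.star_def, ← Complex.exp_conj]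
    congr 1
    simp [neg_div, Complex.conj_ofNat]
  have hT : ∀ k : ℕ, transferFn N M L H ((k : ℝ) / K)
      = ∑ l : Fin L, (ω ^ (l : ℕ)) ^ k • H l := by
    intro k
    unfold transferFn
    refine Finset.sum_congr rfl fun l _ => ?_
    congr 1
    rw [hdef, ← Complex.exp_nat_mul, ← Complex.exp_nat_mul]
    congr 1
    push_cast
    field_simp
  have hexp : ∀ k : ℕ, (transferFn N M L H ((k : ℝ) / K))ᴴ * transferFn N M L H ((k : ℝ) / K)
      = ∑ l : Fin L, ∑ m : Fin L,
        ((ω⁻¹ ^ (l : ℕ)) * ω ^ (m : ℕ)) ^ k • ((H l)ᴴ * H m) := by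
    intro k
    rw [hT, conjTranspose_sum, Matrix.sum_mul]
    refine Finset.sum_congr rfl fun l _ => ?_
    rw [Matrix.mul_sum]
    refine Finset.sum_congr rfl fun m _ => ?_
    rw [conjTranspose_smul, star_pow, star_pow, hstar, Matrix.smul_mul, Matrix.mul_smul,
      smul_smul, ← mul_pow]
  simp_rw [hexp]
  rw [Finset.sum_comm, Finset.smul_sum]
  refine Finset.sum_congr rfl fun l _ => ?_
  rw [Finset.sum_comm]
  simp_rw [← Finset.sum_smul]
  rw [Finset.sum_eq_single l]
  · rw [sum_inv_pow_mul_pow hω hK (by omega) (by omega), if_pos rfl]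
  · intro m _ hm
    rw [sum_inv_pow_mul_pow hω hK (by omega) (by omega),
      if_neg (fun h => hm (Fin.ext h.symm)), zero_smul]
  · simp

/-- Variational lower bound for a diagonal entry of the inverse; the bound is affine in `S`. -/
lemma two_re_sub_le_inv_diag {M : ℕ} {S : Matrix (Fin M) (Fin M) ℂ} (hS : S.PosDef)
    (y : Fin M → ℂ) (j : Fin M) :
    2 * (y j).re - (star y ⬝ᵥ (S *ᵥ y)).re ≤ (S⁻¹ j j).re := by
  have hu : IsUnit S.det := (Matrix.isUnit_iff_isUnit_det S).1 hS.isUnit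
  set w : Fin M → ℂ := S⁻¹ *ᵥ Pi.single j 1 with hw
  have hSw : S *ᵥ w = Pi.single j 1 := by
    rw [hw, mulVec_mulVec, mul_nonsing_inv _ hu, one_mulVec]
  have hwj : w j = S⁻¹ j j := by simp [hw]
  have h1 : star w ⬝ᵥ (S *ᵥ y) = y j := by
    have : star w ᵥ* S = star (S *ᵥ w) := by
      rw [star_mulVec S w, hS.isHermitian.eq]
    rw [dotProduct_mulVec, this, hSw, ← Pi.single_star]
    simp
  have h := (Complex.le_def.1 (hS.posSemidef.dotProduct_mulVec_nonneg (y - w))).1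
  rw [mulVec_sub, star_sub, sub_dotProduct, dotProduct_sub, dotProduct_sub, h1, hSw] at h
  simp [hwj] at h
  linarith

lemma posDef_one_add_smul {M : ℕ} {c : ℝ} (hc : 0 ≤ c)
    {A : Matrix (Fin M) (Fin M) ℂ} (hA : A.PosSemidef) :
    ((1 : Matrix (Fin M) (Fin M) ℂ) + (c : ℂ) • A).PosDef :=
  PosDef.one.add_posSemidef (hA.smul (by exact_mod_cast hc))

/-- **Jensen inequality for the averaged MMSE diagonal entries.**  For `K ≥ L` and every
`j`, `(1/K) ∑_{k=0}^{K-1} [S(k/K)⁻¹]_{jj} ≥ ([I_M + (ρ/M) ∑_l H_lᴴH_l]⁻¹)_{jj}` where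
`S(ν) = I_M + (ρ/M) H(e^{2iπν})ᴴ H(e^{2iπν})`. -/
theorem avg_inv_diag_ge
    (N M L K : ℕ) (hL : 1 ≤ L) (hKL : L ≤ K) (hK : 1 ≤ K)
    (H : Fin L → Matrix (Fin N) (Fin M) ℂ) (ρ : ℝ) (hρ : 0 < ρ) (j : Fin M) :
    ((((1 : Matrix (Fin M) (Fin M) ℂ) +
        ((ρ / M : ℝ) : ℂ) • ∑ l : Fin L, (H l)ᴴ * H l)⁻¹) j j).re ≤
      (1 / K : ℝ) * ∑ k ∈ Finset.range K,
        ((((1 : Matrix (Fin M) (Fin M) ℂ) + ((ρ / M : ℝ) : ℂ) •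
            ((transferFn N M L H ((k : ℝ) / K))ᴴ * transferFn N M L H ((k : ℝ) / K)))⁻¹)
          j j).re := by
  have hKpos : (0 : ℝ) < K := by exact_mod_cast hK
  have hc : 0 ≤ ρ / M := by positivity
  set c : ℝ := ρ / M
  set B : Matrix (Fin M) (Fin M) ℂ := ∑ l : Fin L, (H l)ᴴ * H l with hB
  set A : ℕ → Matrix (Fin M) (Fin M) ℂ := fun k =>
    (transferFn N M L H ((k : ℝ) / K))ᴴ * transferFn N M L H ((k : ℝ) / K) with hA
  have hsum : ∑ k ∈ Finset.range K, A k = (K : ℂ) • B :=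
    sum_conjTranspose_mul_transferFn N M L K hKL hK H
  have hBpos : ((1 : Matrix (Fin M) (Fin M) ℂ) + (c : ℂ) • B).PosDef :=
    posDef_one_add_smul hc
      (posSemidef_sum _ fun l _ => posSemidef_conjTranspose_mul_self (H l))
  set S : Matrix (Fin M) (Fin M) ℂ := 1 + (c : ℂ) • B with hS
  have hu : IsUnit S.det := (Matrix.isUnit_iff_isUnit_det S).1 hBpos.isUnit
  -- The maximiser of the variational bound for the averaged matrix `S`.
  set y : Fin M → ℂ := S⁻¹ *ᵥ Pi.single j 1 with hy
  have hyj : y j = S⁻¹ j j := by simp [hy]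
  have hSy : S *ᵥ y = Pi.single j 1 := by
    rw [hy, mulVec_mulVec, mul_nonsing_inv _ hu, one_mulVec]
  have hq : (star y ⬝ᵥ (S *ᵥ y)).re = (S⁻¹ j j).re := by
    rw [hSy]
    simp [hyj]
  have hbound : ∀ k ∈ Finset.range K,
      2 * (y j).re - (star y ⬝ᵥ ((1 + (c : ℂ) • A k) *ᵥ y)).re
        ≤ (((1 + (c : ℂ) • A k)⁻¹ : Matrix (Fin M) (Fin M) ℂ) j j).re := fun k _ =>
    two_re_sub_le_inv_diag (posDef_one_add_smul hc (posSemidef_conjTranspose_mul_self _)) y j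
  have hmat : ∑ k ∈ Finset.range K, ((1 : Matrix (Fin M) (Fin M) ℂ) + (c : ℂ) • A k)
      = (K : ℂ) • S := by
    rw [Finset.sum_add_distrib, ← Finset.smul_sum, hsum, hS, smul_add, smul_comm]
    simp [← Nat.cast_smul_eq_nsmul ℂ]
  have havg : ∑ k ∈ Finset.range K, (star y ⬝ᵥ ((1 + (c : ℂ) • A k) *ᵥ y)).re
      = K * (S⁻¹ j j).re := by
    rw [← Complex.re_sum, ← dotProduct_sum, ← sum_mulVec, hmat, smul_mulVec, dotProduct_smul,
      smul_eq_mul, ← Complex.ofReal_natCast, Complex.re_ofReal_mul, hq]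
  have h := Finset.sum_le_sum hbound
  rw [Finset.sum_sub_distrib, havg, hyj, Finset.sum_const, Finset.card_range, nsmul_eq_mul] at h
  rw [one_div, inv_mul_eq_div, le_div_iff₀ hKpos]
  linarith
end

section
/- Let Λ = diag(λ_1,…,λ_M) with λ_i ≥ 0, let U be an M×M unitary matrix, let B be an M×M Hermitian positive semidefinite matrix whose smallest eigenvalue is γ ≥ 0, and let c > 0. Then the matrix I_M + c U B U* Λ is invertible and Tr[ (I_M + c U B U* Λ)^{−1} ] ≤ Tr[ (I_M + c γ Λ)^{−1} ] = ∑_{j=1}^M (1 + c γ λ_j)^{−1}. -/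
/-!
Write `Λ = S * S` with `S = diag(√λ_i)` and `K = c • U B Uᴴ`. The matrices `1 + K S * S` and
`P = 1 + S * (K S)` are invertible together, and their inverses have the same trace
(`isUnit_and_trace_inv_one_add_mul`, the push-through identity), so the non-Hermitian matrix of the
theorem may be replaced by the Hermitian matrix `P`. The spectral theorem gives `B - γ • 1 ⪰ 0`
(`posSemidef_sub_smul_one`), and conjugating by `S U` gives `P ⪰ Q`, where
`Q = 1 + c γ Λ` is diagonal and positive definite. Inversion reverses the order on positive
definite matrices (`posSemidef_inv_sub_inv`), and the trace is monotone.
-/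

open Matrix
open scoped ComplexOrder

/-- The push-through identity `(1 + C S)⁻¹ = 1 - C (1 + S C)⁻¹ S` and cyclicity of the trace show
that `1 + C S` inherits invertibility and the trace of its inverse from `1 + S C`. -/
lemma isUnit_and_trace_inv_one_add_mul {n : Type*} [Fintype n] [DecidableEq n]
    (C S : Matrix n n ℂ) (h : IsUnit (1 + S * C)) :
    IsUnit (1 + C * S) ∧ (1 + C * S)⁻¹.trace = (1 + S * C)⁻¹.trace := by
  have hdet := (Matrix.isUnit_iff_isUnit_det _).1 h
  set R := (1 + S * C)⁻¹ with hR
  have h1 : S * C * R = 1 - R := by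
    have h2 : (1 + S * C) * R = 1 := Matrix.mul_nonsing_inv _ hdet
    rw [← h2]; noncomm_ring
  have hinv : (1 + C * S) * (1 - C * R * S) = 1 := by
    have h3 : (1 + C * S) * (1 - C * R * S)
        = 1 + C * S - C * R * S - C * (S * C * R) * S := by noncomm_ring
    rw [h3, h1]; noncomm_ring
  refine ⟨IsUnit.of_mul_eq_one _ hinv, ?_⟩
  rw [Matrix.inv_eq_right_inv hinv, Matrix.trace_sub, Matrix.mul_assoc, Matrix.trace_mul_comm,
    Matrix.mul_assoc, Matrix.trace_mul_comm, h1, Matrix.trace_sub, sub_sub_cancel]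

/-- Inversion reverses the Loewner order. With `X = P⁻¹` and `Y = Q⁻¹` this follows from
`Y - X = X (P - Q) X + (X - Y) Q (X - Y)`, a sum of two positive semidefinite matrices. -/
lemma posSemidef_inv_sub_inv {n : Type*} [Fintype n] [DecidableEq n]
    {P Q : Matrix n n ℂ} (hP : P.PosDef) (hQ : Q.PosDef) (hPQ : (P - Q).PosSemidef) :
    (Q⁻¹ - P⁻¹).PosSemidef := by
  have h1 := hPQ.mul_mul_conjTranspose_same P⁻¹
  have h2 := hQ.posSemidef.mul_mul_conjTranspose_same (P⁻¹ - Q⁻¹)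
  rw [hP.inv.isHermitian.eq] at h1
  rw [(hP.inv.isHermitian.sub hQ.inv.isHermitian).eq] at h2
  have hp : P⁻¹ * P = 1 :=
    Matrix.nonsing_inv_mul _ ((Matrix.isUnit_iff_isUnit_det _).1 hP.isUnit)
  have hq : Q⁻¹ * Q = 1 :=
    Matrix.nonsing_inv_mul _ ((Matrix.isUnit_iff_isUnit_det _).1 hQ.isUnit)
  have hq' : Q * Q⁻¹ = 1 :=
    Matrix.mul_nonsing_inv _ ((Matrix.isUnit_iff_isUnit_det _).1 hQ.isUnit)
  have h3 : Q⁻¹ - P⁻¹ = P⁻¹ * (P - Q) * P⁻¹ + (P⁻¹ - Q⁻¹) * Q * (P⁻¹ - Q⁻¹) := by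
    have h4 : P⁻¹ * (P - Q) * P⁻¹ + (P⁻¹ - Q⁻¹) * Q * (P⁻¹ - Q⁻¹)
        = (P⁻¹ * P) * P⁻¹ - P⁻¹ * (Q * Q⁻¹) - (Q⁻¹ * Q) * P⁻¹ + (Q⁻¹ * Q) * Q⁻¹ := by
      noncomm_ring
    rw [h4, hp, hq, hq']; noncomm_ring
  rw [h3]
  exact h1.add h2

lemma posSemidef_sub_smul_one {n : Type*} [Fintype n] [DecidableEq n]
    {B : Matrix n n ℂ} (hB : B.IsHermitian) {γ : ℝ} (hγ : ∀ i, γ ≤ hB.eigenvalues i) :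
    (B - (γ : ℂ) • (1 : Matrix n n ℂ)).PosSemidef := by
  set V : Matrix n n ℂ := (hB.eigenvectorUnitary : Matrix n n ℂ) with hV
  have hVV : V * Vᴴ = 1 := Unitary.coe_mul_star_self hB.eigenvectorUnitary
  have hsp : B = V * diagonal (fun i => (hB.eigenvalues i : ℂ)) * Vᴴ := by
    conv_lhs => rw [hB.spectral_theorem, Unitary.conjStarAlgAut_apply]
    rfl
  have hd : (diagonal (fun i => ((hB.eigenvalues i : ℂ) - (γ : ℂ)))).PosSemidef := by
    refine PosSemidef.diagonal fun i => ?_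
    simpa using hγ i
  have h1 := hd.mul_mul_conjTranspose_same V
  have h2 : diagonal (fun i => ((hB.eigenvalues i : ℂ) - (γ : ℂ)))
      = diagonal (fun i => (hB.eigenvalues i : ℂ)) - (γ : ℂ) • (1 : Matrix n n ℂ) := by
    rw [Matrix.smul_one_eq_diagonal, Matrix.diagonal_sub]
  rw [h2, Matrix.mul_sub, Matrix.sub_mul, ← hsp, Matrix.mul_smul, Matrix.smul_mul,
    Matrix.mul_one, hVV] at h1
  exact h1

/-- **Trace bound via the smallest eigenvalue.**  If `Λ = diag(λ)` with `λ_i ≥ 0`, `U` is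
unitary, `B ⪰ 0` is Hermitian with smallest eigenvalue `γ ≥ 0` and `c > 0`, then
`I + c U B Uᴴ Λ` is invertible and
`Tr[(I + c U B Uᴴ Λ)⁻¹] ≤ Tr[(I + c γ Λ)⁻¹] = ∑_j (1 + c γ λ_j)⁻¹`. -/
theorem trace_inv_le_of_smallest_eigenvalue
    (M : ℕ) (lam : Fin M → ℝ) (hlam : ∀ i, 0 ≤ lam i)
    (U : Matrix (Fin M) (Fin M) ℂ) (hU : U ∈ Matrix.unitaryGroup (Fin M) ℂ)
    (B : Matrix (Fin M) (Fin M) ℂ) (hB : B.PosSemidef)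
    (γ : ℝ) (hγ0 : 0 ≤ γ)
    (hγ : IsLeast (Set.range hB.1.eigenvalues) γ)
    (c : ℝ) (hc : 0 < c) :
    IsUnit ((1 : Matrix (Fin M) (Fin M) ℂ) +
        (c : ℂ) • (U * B * Uᴴ * Matrix.diagonal (fun i => (lam i : ℂ)))) ∧
    (((1 : Matrix (Fin M) (Fin M) ℂ) +
        (c : ℂ) • (U * B * Uᴴ * Matrix.diagonal (fun i => (lam i : ℂ))))⁻¹).trace.re ≤
      ∑ j : Fin M, (1 + c * γ * lam j)⁻¹ := by
  have hUU : U * Uᴴ = 1 := (Matrix.mem_unitaryGroup_iff).1 hU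
  have hc' : (0 : ℂ) ≤ (c : ℂ) := by exact_mod_cast hc.le
  set S : Matrix (Fin M) (Fin M) ℂ := diagonal (fun i => ((√(lam i) : ℝ) : ℂ)) with hS
  have hSH : Sᴴ = S := by
    rw [hS, Matrix.diagonal_conjTranspose]
    congr 1; ext i; simp
  have hSS : S * S = diagonal (fun i => (lam i : ℂ)) := by
    rw [hS, Matrix.diagonal_mul_diagonal]
    congr 1; ext i
    rw [← Complex.ofReal_mul, Real.mul_self_sqrt (hlam i)]
  set C : Matrix (Fin M) (Fin M) ℂ := (c : ℂ) • (U * B * Uᴴ * S) with hC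
  have hCS : (c : ℂ) • (U * B * Uᴴ * diagonal (fun i => (lam i : ℂ))) = C * S := by
    rw [← hSS, hC, Matrix.smul_mul, Matrix.mul_assoc _ S S]
  have hSC : S * C = (c : ℂ) • ((S * U) * B * (S * U)ᴴ) := by
    rw [hC, Matrix.mul_smul, Matrix.conjTranspose_mul, hSH]
    simp only [Matrix.mul_assoc]
  set d : Fin M → ℝ := fun j => 1 + c * γ * lam j with hd
  have hdpos : ∀ j, 0 < d j := fun j => by
    have := mul_nonneg (mul_nonneg hc.le hγ0) (hlam j)
    simp only [hd]; linarith
  set Q : Matrix (Fin M) (Fin M) ℂ := diagonal (fun j => (d j : ℂ)) with hQdef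
  have hQ : Q.PosDef := PosDef.diagonal fun j => by exact_mod_cast hdpos j
  have hP : (1 + S * C).PosDef := by
    rw [hSC]
    exact PosDef.one.add_posSemidef ((hB.mul_mul_conjTranspose_same _).smul hc')
  have hPQ : (1 + S * C - Q).PosSemidef := by
    have h1 := ((posSemidef_sub_smul_one hB.1
      fun i => hγ.2 ⟨i, rfl⟩).mul_mul_conjTranspose_same (S * U)).smul hc'
    have h2 : (S * U) * (S * U)ᴴ = diagonal (fun i => (lam i : ℂ)) := by
      rw [Matrix.conjTranspose_mul, hSH, Matrix.mul_assoc, ← Matrix.mul_assoc U, hUU,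
        Matrix.one_mul, hSS]
    have h3 : Q = 1 + (c : ℂ) • (γ : ℂ) • diagonal (fun i => (lam i : ℂ)) := by
      rw [hQdef, ← Matrix.diagonal_one, ← Matrix.diagonal_smul, ← Matrix.diagonal_smul,
        Matrix.diagonal_add]
      congr 1; ext i
      simp [hd, mul_assoc]
    rw [Matrix.mul_sub, Matrix.sub_mul, Matrix.mul_smul, Matrix.smul_mul, Matrix.mul_one, h2,
      smul_sub, ← hSC] at h1
    rwa [h3, add_sub_add_left_eq_sub]
  have hQinv : Q⁻¹.trace.re = ∑ j, (d j)⁻¹ := by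
    have h1 : Q * diagonal (fun j => (((d j)⁻¹ : ℝ) : ℂ)) = 1 := by
      rw [hQdef, Matrix.diagonal_mul_diagonal, ← Matrix.diagonal_one]
      congr 1; ext j
      rw [← Complex.ofReal_mul, mul_inv_cancel₀ (hdpos j).ne', Complex.ofReal_one]
    rw [Matrix.inv_eq_right_inv h1, Matrix.trace_diagonal, ← Complex.ofReal_sum,
      Complex.ofReal_re]
  obtain ⟨hunit, htrace⟩ := isUnit_and_trace_inv_one_add_mul C S hP.isUnit
  rw [hCS]
  refine ⟨hunit, ?_⟩
  have hle := (Complex.le_def.1 (posSemidef_inv_sub_inv hP hQ hPQ).trace_nonneg).1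
  rw [Matrix.trace_sub, Complex.sub_re, Complex.zero_re, hQinv] at hle
  rw [htrace]
  exact sub_nonneg.1 hle
end

section
/- Every n×n unitary matrix A (n ≥ 2) admits a factorization A = D · J_{n−1,n}(θ_{n−1}) ⋯ J_{2,3}(θ_2) J_{1,2}(θ_1) · diag(1, V), where D = diag(e^{iφ_1},…,e^{iφ_n}) with φ_1,…,φ_n ∈ [0,2π), θ_1,…,θ_{n−1} ∈ [0,π/2], V is an (n−1)×(n−1) unitary matrix, and J_{i,i+1}(θ) denotes the n×n real Givens rotation equal to the identity except on rows and columns i, i+1, where it equals [[cos θ, −sin θ],[sin θ, cos θ]]. -/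
/-!
Only the first column of `A` matters.  It is a unit vector `u`, and it suffices to find a unitary
`M = D · J_{n-1,n}(θ_{n-1}) ⋯ J_{1,2}(θ_1)` with the same first column: then `M⁻¹ A` is a unitary
matrix fixing `e₀`, hence of the form `diag(1, V)` (`exists_eq_diag_one`).

Let `r_k` be the Euclidean norm of the tail `(u_k, …, u_{n-1})`, so that `r_0 = 1` and
`r_k² = |u_k|² + r_{k+1}²`.  Choose `θ_k ∈ [0, π/2]` to be the polar angle of the point
`(|u_k|, r_{k+1})` of the closed first quadrant (`exists_polar_angle`).  By induction on `k`, the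
first `k` rotations send `e₀` to `(|u_0|, …, |u_{k-1}|, r_k, 0, …, 0)`
(`givens_prod_mulVec`); for `k = n - 1` this is the vector of moduli of `u`, because
`r_{n-1} = |u_{n-1}|`.  The diagonal matrix `D` then supplies the arguments of the `u_i`.
-/

open Matrix

/-- The `n × n` real Givens rotation `J_{p,p+1}(θ)` (0-based row index `p`): it equals the
identity except on rows and columns `p, p+1`, where it equals
`[[cos θ, -sin θ], [sin θ, cos θ]]`. -/
noncomputable def givens (n p : ℕ) (θ : ℝ) : Matrix (Fin n) (Fin n) ℂ :=
  fun a b =>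
    if (a : ℕ) = p ∧ (b : ℕ) = p then (Real.cos θ : ℂ)
    else if (a : ℕ) = p ∧ (b : ℕ) = p + 1 then (-(Real.sin θ) : ℂ)
    else if (a : ℕ) = p + 1 ∧ (b : ℕ) = p then (Real.sin θ : ℂ)
    else if (a : ℕ) = p + 1 ∧ (b : ℕ) = p + 1 then (Real.cos θ : ℂ)
    else if a = b then 1 else 0

/-- Every point of the closed first quadrant has a polar angle in `[0, π/2]`; the origin is
included. -/
lemma exists_polar_angle (a b r : ℝ) (ha : 0 ≤ a) (hb : 0 ≤ b) (hr : 0 ≤ r)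
    (h : r ^ 2 = a ^ 2 + b ^ 2) :
    ∃ t ∈ Set.Icc 0 (Real.pi / 2), r * Real.cos t = a ∧ r * Real.sin t = b := by
  rcases hr.eq_or_lt with h0 | h0
  · refine ⟨0, ⟨le_rfl, by positivity⟩, ?_, ?_⟩ <;> subst h0 <;> simp <;> nlinarith
  · have har : a ≤ r := by nlinarith
    have h1 : 0 ≤ a / r := by positivity
    have h2 : a / r ≤ 1 := (div_le_one h0).2 har
    refine ⟨Real.arccos (a / r), ⟨Real.arccos_nonneg _, Real.arccos_le_pi_div_two.2 h1⟩, ?_, ?_⟩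
    · rw [Real.cos_arccos (by linarith) h2]; field_simp
    · rw [Real.sin_arccos]
      have : 1 - (a / r) ^ 2 = (b / r) ^ 2 := by
        field_simp; linarith
      rw [this, Real.sqrt_sq (by positivity)]; field_simp

lemma exists_phase (z : ℂ) :
    ∃ t ∈ Set.Ico 0 (2 * Real.pi), z = Complex.exp (Complex.I * (t : ℂ)) * (‖z‖ : ℂ) := by
  refine ⟨toIcoMod Real.two_pi_pos 0 z.arg,
    by simpa using toIcoMod_mem_Ico Real.two_pi_pos 0 z.arg, ?_⟩
  have h : Complex.exp (Complex.I * ((toIcoMod Real.two_pi_pos 0 z.arg : ℝ) : ℂ))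
      = Complex.exp (z.arg * Complex.I) := by
    rw [Complex.exp_eq_exp_iff_exists_int]
    refine ⟨-toIcoDiv Real.two_pi_pos 0 z.arg, ?_⟩
    rw [toIcoMod]
    push_cast
    simp
    ring
  rw [h, mul_comm]
  exact (Complex.norm_mul_exp_arg_mul_I z).symm

lemma givens_mulVec (n p : ℕ) (t : ℝ) (hp : p + 1 < n) (x : Fin n → ℂ) :
    givens n p t *ᵥ x = fun a : Fin n =>
      if (a : ℕ) = p then
        (Real.cos t : ℂ) * x ⟨p, by omega⟩ - (Real.sin t : ℂ) * x ⟨p + 1, hp⟩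
      else if (a : ℕ) = p + 1 then
        (Real.sin t : ℂ) * x ⟨p, by omega⟩ + (Real.cos t : ℂ) * x ⟨p + 1, hp⟩
      else x a := by
  have hne : (⟨p, by omega⟩ : Fin n) ≠ ⟨p + 1, hp⟩ := by simp
  ext a
  simp only [mulVec, dotProduct]
  split_ifs with h1 h2
  · rw [Fintype.sum_eq_add _ _ hne]
    · simp [givens, h1]; ring
    · rintro b ⟨hb1, hb2⟩
      have hb1' : (b : ℕ) ≠ p := fun h => hb1 (Fin.ext h)
      have hb2' : (b : ℕ) ≠ p + 1 := fun h => hb2 (Fin.ext h)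
      have : a ≠ b := fun h => hb1' (h ▸ h1)
      simp [givens, hb1', hb2', this]
  · rw [Fintype.sum_eq_add _ _ hne]
    · simp [givens, h2]
    · rintro b ⟨hb1, hb2⟩
      have hb1' : (b : ℕ) ≠ p := fun h => hb1 (Fin.ext h)
      have hb2' : (b : ℕ) ≠ p + 1 := fun h => hb2 (Fin.ext h)
      have : a ≠ b := fun h => hb2' (h ▸ h2)
      simp [givens, hb1', hb2', this]
  · simp [givens, h1, h2]

lemma star_givens (n p : ℕ) (t : ℝ) : star (givens n p t) = givens n p (-t) := by
  ext a b
  simp only [star_apply, givens, Real.cos_neg, Real.sin_neg]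
  have hc : star (Real.cos t : ℂ) = (Real.cos t : ℂ) := Complex.conj_ofReal _
  have hs : star (Real.sin t : ℂ) = (Real.sin t : ℂ) := Complex.conj_ofReal _
  by_cases hab : a = b
  · subst hab
    split_ifs <;> first | omega | simp_all
  · have hba : b ≠ a := Ne.symm hab
    split_ifs <;> first | omega | simp_all

lemma givens_mem_unitaryGroup (n p : ℕ) (t : ℝ) (hp : p + 1 < n) :
    givens n p t ∈ Matrix.unitaryGroup (Fin n) ℂ := by
  rw [Matrix.mem_unitaryGroup_iff', star_givens]
  have hcs : (Real.cos t : ℂ) * Real.cos t + (Real.sin t : ℂ) * Real.sin t = 1 := by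
    have := Real.cos_sq_add_sin_sq t
    rw [sq, sq] at this
    exact_mod_cast this
  apply Matrix.toLin'.injective
  apply LinearMap.ext
  intro x
  rw [Matrix.toLin'_apply, Matrix.toLin'_apply, ← mulVec_mulVec, givens_mulVec n p _ hp,
    givens_mulVec n p _ hp, one_mulVec]
  ext a
  simp only [Real.cos_neg, Real.sin_neg, Complex.ofReal_neg, if_true, Nat.succ_ne_self, if_false]
  split_ifs with h1 h2
  · have : a = ⟨p, by omega⟩ := Fin.ext h1
    rw [this]
    linear_combination x ⟨p, by omega⟩ * hcs
  · have : a = ⟨p + 1, hp⟩ := Fin.ext h2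
    rw [this]
    linear_combination x ⟨p + 1, hp⟩ * hcs
  · rfl

lemma givens_prod_mem_unitaryGroup (n : ℕ) (θ : ℕ → ℝ) :
    ((List.range (n - 1)).reverse.map (fun p => givens n p (θ p))).prod
      ∈ Matrix.unitaryGroup (Fin n) ℂ := by
  apply Submonoid.list_prod_mem
  intro x hx
  simp only [List.mem_map, List.mem_reverse, List.mem_range] at hx
  obtain ⟨p, hp, rfl⟩ := hx
  exact givens_mem_unitaryGroup n p _ (by omega)

/-- The effect of the first `k` rotations on `e₀`, when `m i` and `r i` are related by
`r i * (cos (θ i), sin (θ i)) = (m i, r (i + 1))`: each rotation splits the last nonzero coordinate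
`r k` into its final value `m k` and the remainder `r (k + 1)`. -/
lemma givens_prod_mulVec (n : ℕ) (hn : 0 < n) (θ m r : ℕ → ℝ) (h0 : r 0 = 1)
    (hc : ∀ p < n - 1, r p * Real.cos (θ p) = m p)
    (hs : ∀ p < n - 1, r p * Real.sin (θ p) = r (p + 1)) (k : ℕ) (hk : k ≤ n - 1) :
    ((List.range k).reverse.map (fun p => givens n p (θ p))).prod *ᵥ
        (Pi.single (⟨0, hn⟩ : Fin n) (1 : ℂ)) =
      fun a : Fin n => if (a : ℕ) < k then (m a : ℂ) else if (a : ℕ) = k then (r k : ℂ) else 0 := by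
  induction k with
  | zero =>
    ext a
    simp [h0, one_apply, Fin.ext_iff]
  | succ k ih =>
    rw [List.range_succ, List.reverse_append, List.reverse_singleton, List.singleton_append,
      List.map_cons, List.prod_cons, ← mulVec_mulVec, ih (by omega),
      givens_mulVec n k _ (by omega)]
    ext a
    have hc' := hc k (by omega)
    have hs' := hs k (by omega)
    rcases lt_trichotomy (a : ℕ) k with h | h | h
    · simp [h, h.ne, show (a : ℕ) ≠ k + 1 by omega, show (a : ℕ) < k + 1 by omega]
    · simp only [h]
      simp [← hc', mul_comm]
    · by_cases h2 : (a : ℕ) = k + 1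
      · simp [h2, ← hs', mul_comm]
      · simp [h2, h.ne', show ¬ (a : ℕ) < k by omega, show ¬ (a : ℕ) < k + 1 by omega]

lemma diagonal_phase_mem_unitaryGroup (n : ℕ) (φ : Fin n → ℝ) :
    Matrix.diagonal (fun i => Complex.exp (Complex.I * (φ i : ℂ)))
      ∈ Matrix.unitaryGroup (Fin n) ℂ := by
  rw [Matrix.mem_unitaryGroup_iff', star_eq_conjTranspose, diagonal_conjTranspose,
    diagonal_mul_diagonal, ← diagonal_one]
  congr 1
  ext i
  simp [← Complex.exp_conj, ← Complex.exp_add]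

/-- A unitary matrix fixing `e₀` also has first row `e₀ᵀ`, since its adjoint is its inverse and so
fixes `e₀` too; hence it is `diag(1, V)` with `V` unitary. -/
lemma exists_eq_diag_one (n : ℕ) (hn : 0 < n) (W : Matrix (Fin n) (Fin n) ℂ)
    (hW : W ∈ Matrix.unitaryGroup (Fin n) ℂ)
    (h0 : W *ᵥ Pi.single (⟨0, hn⟩ : Fin n) (1 : ℂ) = Pi.single (⟨0, hn⟩ : Fin n) (1 : ℂ))
    (h : 1 + (n - 1) = n) :
    ∃ V ∈ Matrix.unitaryGroup (Fin (n - 1)) ℂ,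
      W = Matrix.reindex (finSumFinEquiv.trans (finCongr h))
              (finSumFinEquiv.trans (finCongr h))
              (Matrix.fromBlocks (1 : Matrix (Fin 1) (Fin 1) ℂ) 0 0 V) := by
  obtain ⟨m, rfl⟩ : ∃ m, n = m + 1 := ⟨n - 1, by omega⟩
  simp only [Nat.add_sub_cancel] at h ⊢
  have hW' := Matrix.mem_unitaryGroup_iff'.1 hW
  have h0' : star W *ᵥ Pi.single (0 : Fin (m + 1)) (1 : ℂ) = Pi.single 0 1 := by
    have := congrArg (fun v => star W *ᵥ v) h0
    rw [mulVec_mulVec, hW', one_mulVec] at this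
    exact this.symm
  have hcol : ∀ i, W i 0 = (Pi.single (0 : Fin (m + 1)) (1 : ℂ) : Fin (m + 1) → ℂ) i := by
    intro i
    simpa using congrFun h0 i
  have hrow : ∀ j : Fin m, W 0 j.succ = 0 := by
    intro j
    simpa using congrFun h0' j.succ
  refine ⟨W.submatrix Fin.succ Fin.succ, ?_, ?_⟩
  · rw [Matrix.mem_unitaryGroup_iff']
    ext i j
    have := congrFun (congrFun hW' i.succ) j.succ
    simp only [mul_apply, star_apply, Fin.sum_univ_succ, hrow] at this
    simpa [mul_apply, one_apply] using this
  · rw [← Equiv.symm_apply_eq]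
    have e1 : (finSumFinEquiv.trans (finCongr h)) (Sum.inl 0) = (0 : Fin (m + 1)) := by
      apply Fin.ext; simp
    have e2 : ∀ i : Fin m, (finSumFinEquiv.trans (finCongr h)) (Sum.inr i) = i.succ := by
      intro i; apply Fin.ext; simp
    ext (i | i) (j | j)
    · rw [Subsingleton.elim i 0, Subsingleton.elim j 0]
      simp only [reindex_symm, reindex_apply, submatrix_apply, Equiv.symm_symm, e1, hcol]
      simp
    · rw [Subsingleton.elim i 0]
      simp only [reindex_symm, reindex_apply, submatrix_apply, Equiv.symm_symm, e1, e2, hrow]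
      simp
    · rw [Subsingleton.elim j 0]
      simp only [reindex_symm, reindex_apply, submatrix_apply, Equiv.symm_symm, e1, e2, hcol]
      simp
    · simp only [reindex_symm, reindex_apply, submatrix_apply, Equiv.symm_symm, e2]
      simp

/-- **Angular factorization of unitary matrices.**  Every `n × n` unitary matrix `A`
(`n ≥ 2`) factors as `A = D · J_{n-1,n}(θ_{n-1}) ⋯ J_{1,2}(θ_1) · diag(1, V)` with
`D = diag(e^{iφ_1},…,e^{iφ_n})`, `φ_i ∈ [0,2π)`, `θ_i ∈ [0,π/2]` and `V` an
`(n-1) × (n-1)` unitary matrix.  (Here `J_{i,i+1}` of the paper is `givens n (i-1)`.) -/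
theorem unitary_angular_factorization
    (n : ℕ) (hn : 2 ≤ n) (A : Matrix (Fin n) (Fin n) ℂ)
    (hA : A ∈ Matrix.unitaryGroup (Fin n) ℂ) :
    ∃ (φ : Fin n → ℝ) (θ : ℕ → ℝ) (V : Matrix (Fin (n - 1)) (Fin (n - 1)) ℂ),
      (∀ i, φ i ∈ Set.Ico 0 (2 * Real.pi)) ∧
      (∀ p < n - 1, θ p ∈ Set.Icc 0 (Real.pi / 2)) ∧
      V ∈ Matrix.unitaryGroup (Fin (n - 1)) ℂ ∧
      A = Matrix.diagonal (fun i => Complex.exp (Complex.I * (φ i : ℂ))) *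
          ((List.range (n - 1)).reverse.map (fun p => givens n p (θ p))).prod *
          (Matrix.reindex (finSumFinEquiv.trans (finCongr (by omega)))
              (finSumFinEquiv.trans (finCongr (by omega)))
              (Matrix.fromBlocks (1 : Matrix (Fin 1) (Fin 1) ℂ) 0 0 V)) := by
  have hn0 : 0 < n := by omega
  set e : Fin n → ℂ := Pi.single ⟨0, hn0⟩ 1 with he
  -- the moduli of the first column, extended by zero to all of `ℕ`, and the norms of its tails
  let m : ℕ → ℝ := fun i => if h : i < n then ‖A ⟨i, h⟩ ⟨0, hn0⟩‖ else 0
  let r : ℕ → ℝ := fun k => Real.sqrt (∑ i ∈ Finset.Ico k n, m i ^ 2)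
  have hm : ∀ i, 0 ≤ m i := by
    intro i; simp only [m]; split_ifs <;> simp
  have hmA : ∀ i : Fin n, m i = ‖A i ⟨0, hn0⟩‖ := by
    intro i; simp [m]
  have hrsq : ∀ k, r k ^ 2 = ∑ i ∈ Finset.Ico k n, m i ^ 2 := fun k =>
    Real.sq_sqrt (Finset.sum_nonneg fun i _ => sq_nonneg _)
  have hrec : ∀ k < n, r k ^ 2 = m k ^ 2 + r (k + 1) ^ 2 := by
    intro k hk
    rw [hrsq, hrsq, Finset.sum_eq_sum_Ico_succ_bot hk]
  have hr0 : r 0 = 1 := by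
    have h1 := congrFun (congrFun (Matrix.mem_unitaryGroup_iff'.1 hA) ⟨0, hn0⟩) ⟨0, hn0⟩
    simp only [mul_apply, star_apply, one_apply_eq] at h1
    have h2 : ((∑ i : Fin n, m i ^ 2 : ℝ) : ℂ) = 1 := by
      rw [← h1]
      push_cast
      refine Finset.sum_congr rfl fun i _ => ?_
      rw [hmA]
      exact (Complex.conj_mul' _).symm
    have h3 : ∑ i : Fin n, m i ^ 2 = 1 := by exact_mod_cast h2
    simp only [r]
    rw [← Finset.range_eq_Ico, Finset.sum_range, h3, Real.sqrt_one]
  have hrlast : r (n - 1) = m (n - 1) := by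
    simp only [r]
    rw [Finset.sum_eq_sum_Ico_succ_bot (by omega), show n - 1 + 1 = n by omega]
    simp [Real.sqrt_sq (hm _)]
  have hang : ∀ p, ∃ t, p < n - 1 → t ∈ Set.Icc 0 (Real.pi / 2) ∧
      r p * Real.cos t = m p ∧ r p * Real.sin t = r (p + 1) := by
    intro p
    by_cases hp : p < n - 1
    · obtain ⟨t, ht⟩ := exists_polar_angle (m p) (r (p + 1)) (r p) (hm p) (Real.sqrt_nonneg _)
        (Real.sqrt_nonneg _) (hrec p (by omega))
      exact ⟨t, fun _ => ht⟩
    · exact ⟨0, fun h => absurd h hp⟩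
  choose θ hθ using hang
  choose φ hφ hφA using fun i : Fin n => exists_phase (A i ⟨0, hn0⟩)
  set D := Matrix.diagonal (fun i => Complex.exp (Complex.I * (φ i : ℂ))) with hD
  set P := ((List.range (n - 1)).reverse.map (fun p => givens n p (θ p))).prod with hP
  have hM : D * P ∈ Matrix.unitaryGroup (Fin n) ℂ :=
    mul_mem (diagonal_phase_mem_unitaryGroup n φ) (givens_prod_mem_unitaryGroup n θ)
  have hMe : (D * P) *ᵥ e = A *ᵥ e := by
    rw [← mulVec_mulVec, hP, givens_prod_mulVec n hn0 θ m r hr0 (fun p hp => (hθ p hp).2.1)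
      (fun p hp => (hθ p hp).2.2) (n - 1) le_rfl]
    ext i
    rw [hD, mulVec_diagonal, he, mulVec_single_one]
    conv_rhs => rw [col_apply, hφA i, ← hmA i]
    congr 1
    by_cases hi : (i : ℕ) < n - 1
    · simp [hi]
    · have hi' : (i : ℕ) = n - 1 := by omega
      simp [hi', hrlast]
  have hMM := Matrix.mem_unitaryGroup_iff'.1 hM
  obtain ⟨V, hV, hWV⟩ := exists_eq_diag_one n hn0 (star (D * P) * A)
    (mul_mem (Unitary.star_mem hM) hA)
    (by rw [← he, ← mulVec_mulVec, ← hMe, mulVec_mulVec, hMM, one_mulVec]) (by omega)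
  refine ⟨φ, θ, V, hφ, fun p hp => (hθ p hp).1, hV, ?_⟩
  rw [← hWV, ← mul_assoc, Matrix.mem_unitaryGroup_iff.1 hM, one_mul]
end

section
/- Let M ≥ 1, L ≥ 1 and K ≥ 1 be integers with K > M²(L−1). Then for every m ∈ {1,…,M} one has log₂(M/m) < −log₂( (m−1)/M + (L−1)(M−(m−1))/K ); equivalently, (M/m) · ( (m−1)/M + (L−1)(M−(m−1))/K ) < 1. In particular the rate interval ( M log₂(M/m), −M log₂( (m−1)/M + (L−1)(M−(m−1))/K ) ) is nonempty for every m ∈ {1,…,M}. -/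
/-!
Write `q` for the quantity `(m-1)/M + (L-1)(M-(m-1))/K`. Since `M - (m-1) ≤ M` and `M²(L-1) < K`,
the second summand of `q` is less than `1/M`, hence `q < m/M`. This is `(M/m) q < 1`, and for
`q > 0` strict monotonicity of `log₂` applied to `M/m < q⁻¹` gives the logarithmic form.
-/

/-- **Nonemptiness of the rate intervals.**  If `K > M²(L-1)` then for every
`m ∈ {1,…,M}` one has `(M/m) · ((m-1)/M + (L-1)(M-(m-1))/K) < 1`; equivalently, whenever
the quantity `q = (m-1)/M + (L-1)(M-(m-1))/K` is positive,
`log₂(M/m) < -log₂ q`, so the rate interval `(M log₂(M/m), -M log₂ q)` is nonempty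
(reading `-log₂ 0 = +∞` in the degenerate case `q = 0`). -/
theorem rate_interval_nonempty
    (M L K : ℕ) (hM : 1 ≤ M) (hL : 1 ≤ L) (hK : 1 ≤ K)
    (hcond : M ^ 2 * (L - 1) < K) :
    ∀ m : ℕ, 1 ≤ m → m ≤ M →
      ((M : ℝ) / (m : ℝ)) *
          (((m : ℝ) - 1) / M + ((L : ℝ) - 1) * ((M : ℝ) - ((m : ℝ) - 1)) / K) < 1 ∧
      (0 < ((m : ℝ) - 1) / M + ((L : ℝ) - 1) * ((M : ℝ) - ((m : ℝ) - 1)) / K →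
        Real.logb 2 ((M : ℝ) / (m : ℝ)) <
          - Real.logb 2 (((m : ℝ) - 1) / M + ((L : ℝ) - 1) * ((M : ℝ) - ((m : ℝ) - 1)) / K)) := by
  intro m hm1 hmM
  have hM0 : (0 : ℝ) < M := by exact_mod_cast hM
  have hm0 : (0 : ℝ) < m := by exact_mod_cast hm1
  have hK0 : (0 : ℝ) < K := by exact_mod_cast hK
  have hm1' : (1 : ℝ) ≤ m := by exact_mod_cast hm1
  have hL' : (1 : ℝ) ≤ L := by exact_mod_cast hL
  have hc : (M : ℝ) ^ 2 * ((L : ℝ) - 1) < K := by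
    have h : ((M ^ 2 * (L - 1) : ℕ) : ℝ) < K := by exact_mod_cast hcond
    rwa [Nat.cast_mul, Nat.cast_pow, Nat.cast_sub hL, Nat.cast_one] at h
  -- `M - (m - 1) ≤ M` because `m ≥ 1`, so the hypothesis on `K` bounds the second summand by `1/M`.
  have hs : ((L : ℝ) - 1) * ((M : ℝ) - ((m : ℝ) - 1)) / K < 1 / M := by
    rw [div_lt_div_iff₀ hK0 hM0]
    have h : 0 ≤ (M : ℝ) * ((L : ℝ) - 1) * ((m : ℝ) - 1) :=
      mul_nonneg (mul_nonneg hM0.le (by linarith)) (by linarith)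
    nlinarith
  set q : ℝ := ((m : ℝ) - 1) / M + ((L : ℝ) - 1) * ((M : ℝ) - ((m : ℝ) - 1)) / K with hq
  have hqlt : q < (m : ℝ) / M := by
    have h : ((m : ℝ) - 1) / M + 1 / M = m / M := by ring
    linarith
  have hprod : (M : ℝ) / m * q < 1 := by
    have h := mul_lt_mul_of_pos_left hqlt (div_pos hM0 hm0)
    rwa [div_mul_div_cancel₀ hm0.ne', div_self hM0.ne'] at h
  refine ⟨hprod, fun hq0 => ?_⟩
  rw [← Real.logb_inv]
  refine Real.logb_lt_logb one_lt_two (div_pos hM0 hm0) ?_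
  rwa [← one_div, lt_div_iff₀ hq0]
end
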